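/- arXiv:1205.6980 — 3 statements merged into one kernel-verified Lean document; each statement's English description precedes it below -/
import Mathlib

section
/- Let δ ∈ ℤ, m := ⌊δ/2⌋, and set T := m − 1 if δ is even and T := m if δ is odd. Let λ be a partition and let (i,j) satisfy 1 ≤ j < i and λ^T_i + λ^T_j − i − j + 2 = δ; put n := e_δ(λ)_j (a vertex of L labelled × in x_λ). Then (i,j) belongs to the Young diagram [λ] (equivalently i ≤ λ^T_j) if and only if #{n' ∈ L : n' < n and n' is labelled × in x_λ} − #{n' ∈ L : n' < n and n' is labelled ∘ in x_λ} < T. -/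
open Polynomial

/-- A partition: a weakly decreasing, finitely supported sequence of naturals λ_1, λ_2, …. -/
structure Ptn where
  toFun : ℕ+ → ℕ
  antitone' : ∀ i j : ℕ+, i ≤ j → toFun j ≤ toFun i
  finite_support' : ∃ N : ℕ+, ∀ i : ℕ+, N ≤ i → toFun i = 0

namespace Ptn

/-- The transpose partition: λ^T_i = #{k ≥ 1 : λ_k ≥ i}. -/
noncomputable def transpose (p : Ptn) (i : ℕ+) : ℕ :=
  Set.ncard {k : ℕ+ | (i : ℕ) ≤ p.toFun k}

/-- The empty partition. -/
def empty : Ptn where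
  toFun := fun _ => 0
  antitone' := fun _ _ _ => le_refl 0
  finite_support' := ⟨1, fun _ _ => rfl⟩

end Ptn

/-- e_δ(λ)_i = λ^T_i − δ/2 − i + 1. -/
noncomputable def ed (δ : ℤ) (p : Ptn) (i : ℕ+) : ℚ :=
  (p.transpose i : ℚ) - (δ : ℚ) / 2 - ((i : ℕ) : ℚ) + 1

/-- The δ-degree of singularity: #{(i,j) : 1 ≤ i < j, e_δ(λ)_i + e_δ(λ)_j = 0}. -/
noncomputable def degd (δ : ℤ) (p : Ptn) : ℕ :=
  Set.ncard {q : ℕ+ × ℕ+ | q.1 < q.2 ∧ ed δ p q.1 + ed δ p q.2 = 0}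

/-- The vertex set L: nonnegative integers if δ is even, {1/2, 3/2, …} if δ is odd. -/
def Lset (δ : ℤ) : Set ℚ :=
  {n : ℚ | 0 ≤ n ∧ ∃ k : ℤ, n + (δ : ℚ) / 2 = (k : ℚ)}

/-- Vertex n is labelled ∘ in x_λ: no entry of e_δ(λ) has absolute value n. -/
def IsCirc (δ : ℤ) (p : Ptn) (n : ℚ) : Prop := ∀ i : ℕ+, |ed δ p i| ≠ n

/-- Vertex n is labelled × in x_λ: n > 0 and both n and −n occur as entries. -/
def IsTimes (δ : ℤ) (p : Ptn) (n : ℚ) : Prop :=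
  0 < n ∧ (∃ i : ℕ+, ed δ p i = n) ∧ (∃ i : ℕ+, ed δ p i = -n)

/-- Vertex n is labelled ∧ in x_λ: n > 0, n occurs as an entry and −n does not. -/
def IsUp (δ : ℤ) (p : Ptn) (n : ℚ) : Prop :=
  0 < n ∧ (∃ i : ℕ+, ed δ p i = n) ∧ ¬ (∃ i : ℕ+, ed δ p i = -n)

/-- Vertex n is labelled ∨ in x_λ: n > 0, −n occurs and n does not, or n = 0 and 0 occurs. -/
def IsDown (δ : ℤ) (p : Ptn) (n : ℚ) : Prop :=
  (0 < n ∧ (∃ i : ℕ+, ed δ p i = -n) ∧ ¬ (∃ i : ℕ+, ed δ p i = n)) ∨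
  (n = 0 ∧ ∃ i : ℕ+, ed δ p i = 0)

/-- q is obtained from p by adding one box, in row k. -/
def AddBoxAt (p q : Ptn) (k : ℕ+) : Prop :=
  q.toFun k = p.toFun k + 1 ∧ ∀ t : ℕ+, t ≠ k → q.toFun t = p.toFun t

/-- q is obtained from p by removing one box, from row l. -/
def RemoveBoxAt (p q : Ptn) (l : ℕ+) : Prop :=
  q.toFun l + 1 = p.toFun l ∧ ∀ t : ℕ+, t ≠ l → q.toFun t = p.toFun t

/-- A box is addable to p at position (k,i): λ_k + 1 = i and increasing the k-th part
yields a partition. -/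
def AddableAt (p : Ptn) (k i : ℕ+) : Prop :=
  p.toFun k + 1 = (i : ℕ) ∧ ∃ q : Ptn, AddBoxAt p q k

/-- A box is removable from p at position (l,j): λ_l = j and decreasing the l-th part
yields a partition. -/
def RemovableAt (p : Ptn) (l j : ℕ+) : Prop :=
  p.toFun l = (j : ℕ) ∧ ∃ q : Ptn, RemoveBoxAt p q l

/-- Edge of the Young graph: q is obtained from p by adding or removing a single box. -/
def YoungEdge (p q : Ptn) : Prop := (∃ k, AddBoxAt p q k) ∨ (∃ k, AddBoxAt q p k)

/-- d(i,j) = λ_i + λ_j − i − j + 1 if i ≤ j, and −λ^T_i − λ^T_j + i + j − 1 if i > j. -/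
noncomputable def dbox (p : Ptn) (i j : ℕ+) : ℤ :=
  if (i : ℕ) ≤ (j : ℕ) then
    (p.toFun i : ℤ) + (p.toFun j : ℤ) - ((i : ℕ) : ℤ) - ((j : ℕ) : ℤ) + 1
  else
    -(p.transpose i : ℤ) - (p.transpose j : ℤ) + ((i : ℕ) : ℤ) + ((j : ℕ) : ℤ) - 1

/-- Hook length h(i,j) = λ_i − j + λ^T_j − i + 1. -/
noncomputable def hook (p : Ptn) (i j : ℕ+) : ℤ :=
  (p.toFun i : ℤ) - ((j : ℕ) : ℤ) + (p.transpose j : ℤ) - ((i : ℕ) : ℤ) + 1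

/-- The King polynomial P_λ(u) = ∏_{(i,j)∈[λ]} (u − 1 + d(i,j)) / h(i,j) ∈ ℚ[u]. -/
noncomputable def king (p : Ptn) : Polynomial ℚ :=
  ∏ᶠ (q : ℕ+ × ℕ+) (_ : (q.2 : ℕ) ≤ p.toFun q.1),
    Polynomial.C ((hook p q.1 q.2 : ℚ))⁻¹ *
      (Polynomial.X + Polynomial.C ((dbox p q.1 q.2 : ℚ) - 1))

/-- (ρ_δ)_i = −δ/2 − i + 1. -/
def rhod (δ : ℤ) (i : ℕ+) : ℚ := -(δ : ℚ) / 2 - ((i : ℕ) : ℚ) + 1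

/-- A sequence is dominant if it is strictly decreasing. -/
def Dominant (x : ℕ+ → ℚ) : Prop := ∀ i j : ℕ+, i < j → x j < x i

/-- ε_i: the sequence with 1 in position i and 0 elsewhere. -/
def eps (i : ℕ+) : ℕ+ → ℚ := fun j => if j = i then 1 else 0

/-- Two sequences are adjacent if they differ by ±ε_i for some i. -/
def AdjacentSeq (x y : ℕ+ → ℚ) : Prop := ∃ i : ℕ+, y = x + eps i ∨ y = x - eps i

/-- x lies in the connected component of ρ_δ in the dominant part of the lattice graph:
x is dominant and is joined to ρ_δ by a finite chain of pairwise adjacent dominant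
sequences. -/
def InComponent (δ : ℤ) (x : ℕ+ → ℚ) : Prop :=
  Dominant x ∧ ∃ (r : ℕ) (c : ℕ → ℕ+ → ℚ),
    c 0 = rhod δ ∧ c r = x ∧ (∀ t ≤ r, Dominant (c t)) ∧
    ∀ t < r, AdjacentSeq (c t) (c (t + 1))

/-- λ ∈ A_δ: λ is joined to ∅ in the Young graph by a chain of δ-regular partitions. -/
def InAdelta (δ : ℤ) (p : Ptn) : Prop :=
  ∃ (r : ℕ) (c : ℕ → Ptn), c 0 = Ptn.empty ∧ c r = p ∧
    (∀ t ≤ r, degd δ (c t) = degd δ Ptn.empty) ∧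
    ∀ t < r, YoungEdge (c t) (c (t + 1))

theorem aux_fin (p : Ptn) (i : ℕ+) : {k : ℕ+ | (i : ℕ) ≤ p.toFun k}.Finite := by
  obtain ⟨N, hN⟩ := p.finite_support'
  refine (Set.finite_Iio N).subset ?_
  intro k hk
  by_contra h
  have h0 := hN k (not_lt.mp h)
  have := i.pos
  simp only [Set.mem_setOf_eq] at hk
  omega

theorem aux_tr (p : Ptn) {a b : ℕ+} (h : a ≤ b) : p.transpose b ≤ p.transpose a := by
  refine Set.ncard_le_ncard ?_ (aux_fin p a)
  intro k hk
  have h' : (a : ℕ) ≤ b := h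
  exact h'.trans hk

theorem aux_anti (δ : ℤ) (p : Ptn) : StrictAnti (ed δ p) := by
  intro a b h
  have h1 : (p.transpose b : ℚ) ≤ p.transpose a := by exact_mod_cast aux_tr p h.le
  have h2 : ((a : ℕ) : ℚ) < (b : ℕ) := by exact_mod_cast h
  unfold ed
  linarith

theorem aux_count (δ : ℤ) (p : Ptn) (i j : ℕ+) (hij : j < i) (hneg : ed δ p i = - ed δ p j)
    (W : Finset ℚ) (hW : ∀ x, x ∈ W ↔ x ∈ Lset δ ∧ x < ed δ p j) :
    (Set.ncard {n' : ℚ | n' ∈ Lset δ ∧ n' < ed δ p j ∧ IsTimes δ p n'} : ℤ)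
        - (Set.ncard {n' : ℚ | n' ∈ Lset δ ∧ n' < ed δ p j ∧ IsCirc δ p n'} : ℤ)
      = (i : ℕ) - (j : ℕ) - 1 - W.card := by
  classical
  have hA := aux_anti δ p
  have e1 : {n' : ℚ | n' ∈ Lset δ ∧ n' < ed δ p j ∧ IsTimes δ p n'}
      = ↑(W.filter (fun w => IsTimes δ p w)) := by
    ext x; simp [hW, and_assoc]
  have e2 : {n' : ℚ | n' ∈ Lset δ ∧ n' < ed δ p j ∧ IsCirc δ p n'}
      = ↑(W.filter (fun w => IsCirc δ p w)) := by
    ext x; simp [hW, and_assoc]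
  rw [e1, e2, Set.ncard_coe_finset, Set.ncard_coe_finset]
  have hmem : ∀ k, k ∈ Finset.Ioo j i ↔ |ed δ p k| < ed δ p j := by
    intro k
    rw [Finset.mem_Ioo, abs_lt, ← hneg, hA.lt_iff_gt, hA.lt_iff_gt]
    exact and_comm
  have hmaps : ∀ k ∈ Finset.Ioo j i, |ed δ p k| ∈ W := by
    intro k hk
    rw [hW]
    refine ⟨⟨abs_nonneg _, ?_⟩, (hmem k).1 hk⟩
    rcases abs_choice (ed δ p k) with h | h
    · refine ⟨p.transpose k - (k : ℕ) + 1, ?_⟩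
      rw [h]; unfold ed; push_cast; ring
    · refine ⟨-(p.transpose k - (k : ℕ) + 1) + δ, ?_⟩
      rw [h]; unfold ed; push_cast; ring
  have hcard := Finset.card_eq_sum_card_fiberwise (f := fun k => |ed δ p k|)
    (s := Finset.Ioo j i) (t := W) hmaps
  have hfib : ∀ w ∈ W, (((Finset.Ioo j i).filter (fun k => |ed δ p k| = w)).card : ℤ)
      = 1 + (if IsTimes δ p w then 1 else 0) - (if IsCirc δ p w then 1 else 0) := by
    intro w hw
    have hlt := ((hW w).1 hw).2
    have hw0 := ((hW w).1 hw).1.1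
    by_cases hc : IsCirc δ p w
    · have ht : ¬ IsTimes δ p w := by
        rintro ⟨h0, ⟨a, ha⟩, -⟩
        exact hc a (by rw [ha, abs_of_pos h0])
      have : (Finset.Ioo j i).filter (fun k => |ed δ p k| = w) = ∅ := by
        ext k; simp [hc k]
      simp [this, hc, ht]
    · by_cases ht : IsTimes δ p w
      · obtain ⟨h0, ⟨a, ha⟩, ⟨b, hb⟩⟩ := id ht
        have hab : a ≠ b := by
          rintro rfl
          linarith
        have : (Finset.Ioo j i).filter (fun k => |ed δ p k| = w) = {a, b} := by
          ext k
          simp only [Finset.mem_filter, hmem, Finset.mem_insert, Finset.mem_singleton]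
          constructor
          · rintro ⟨-, h⟩
            rcases (abs_eq hw0).1 h with h | h
            · left; exact hA.injective (h.trans ha.symm)
            · right; exact hA.injective (h.trans hb.symm)
          · rintro (rfl | rfl)
            · rw [ha, abs_of_pos h0]; exact ⟨hlt, rfl⟩
            · rw [hb, abs_neg, abs_of_pos h0]; exact ⟨hlt, rfl⟩
        rw [this, Finset.card_pair hab]
        simp [hc, ht]
      · have hc' := hc
        unfold IsCirc at hc'
        push Not at hc'
        obtain ⟨a, ha⟩ := hc'
        have : (Finset.Ioo j i).filter (fun k => |ed δ p k| = w) = {a} := by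
          ext k
          simp only [Finset.mem_filter, hmem, Finset.mem_singleton]
          constructor
          · rintro ⟨-, h⟩
            by_contra hne
            have hne' : ed δ p k ≠ ed δ p a := fun h' => hne (hA.injective h')
            apply ht
            rcases (abs_eq hw0).1 h with h1 | h1 <;> rcases (abs_eq hw0).1 ha with h2 | h2
            · exact absurd (h1.trans h2.symm) hne'
            · refine ⟨lt_of_le_of_ne hw0 ?_, ⟨k, h1⟩, ⟨a, h2⟩⟩
              rintro rfl; apply hne'; rw [h1, h2]; simp
            · refine ⟨lt_of_le_of_ne hw0 ?_, ⟨a, h2⟩, ⟨k, h1⟩⟩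
              rintro rfl; apply hne'; rw [h1, h2]; simp
            · exact absurd (h1.trans h2.symm) hne'
          · rintro rfl
            exact ⟨by rw [ha]; exact hlt, ha⟩
        simp [this, hc, ht]
  have hcardZ : ((Finset.Ioo j i).card : ℤ)
      = ∑ w ∈ W, (((Finset.Ioo j i).filter (fun k => |ed δ p k| = w)).card : ℤ) := by
    rw [hcard]; push_cast; rfl
  rw [Finset.sum_congr rfl hfib, Finset.sum_sub_distrib, Finset.sum_add_distrib,
    Finset.sum_boole, Finset.sum_boole, PNat.card_Ioo] at hcardZ
  have hij' : (j : ℕ) < i := hij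
  simp only [Finset.sum_const, smul_eq_mul, nsmul_eq_mul, mul_one] at hcardZ
  push_cast at hcardZ
  omega

theorem aux_W (δ : ℤ) (x : ℚ) (N : ℕ) (r : ℚ) (m : ℤ)
    (hr : (r = 0 ∧ δ = 2 * m) ∨ (r = 1/2 ∧ δ = 2 * m + 1)) (hx : x = N + r) :
    ∃ W : Finset ℚ, W.card = N ∧ ∀ y, y ∈ W ↔ y ∈ Lset δ ∧ y < x := by
  refine ⟨(Finset.range N).image (fun k : ℕ => (k : ℚ) + r), ?_, ?_⟩
  · rw [Finset.card_image_of_injective, Finset.card_range]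
    intro a b h
    simpa using h
  · intro y
    simp only [Finset.mem_image, Finset.mem_range, Lset, Set.mem_setOf_eq]
    constructor
    · rintro ⟨k, hk, rfl⟩
      have hk' : (k : ℚ) < N := by exact_mod_cast hk
      have hk0 : (0 : ℚ) ≤ k := by positivity
      rcases hr with ⟨rfl, rfl⟩ | ⟨rfl, rfl⟩
      · exact ⟨⟨by linarith, k + m, by push_cast; ring⟩, by linarith⟩
      · exact ⟨⟨by linarith, k + m + 1, by push_cast; ring⟩, by linarith⟩
    · rintro ⟨⟨h0, k, hk⟩, hlt⟩
      have key : ∃ z : ℤ, y = z + r ∧ 0 ≤ z := by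
        rcases hr with ⟨rfl, rfl⟩ | ⟨rfl, rfl⟩
        · refine ⟨k - m, ?_, ?_⟩
          · push_cast at hk ⊢; linarith
          · have : (0 : ℚ) ≤ ((k - m : ℤ) : ℚ) := by push_cast at hk ⊢; linarith
            exact_mod_cast this
        · refine ⟨k - m - 1, ?_, ?_⟩
          · push_cast at hk ⊢; linarith
          · have : (-1 : ℚ) < ((k - m - 1 : ℤ) : ℚ) := by push_cast at hk ⊢; linarith
            have : (-1 : ℤ) < k - m - 1 := by exact_mod_cast this
            omega
      obtain ⟨z, hz, hz0⟩ := key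
      lift z to ℕ using hz0
      refine ⟨z, ?_, ?_⟩
      · have : (z : ℚ) < N := by push_cast at hz; linarith
        exact_mod_cast this
      · rw [hz]; simp

/-- for a × of x_λ coming from the pair (i,j) (with j < i and
λ^T_i + λ^T_j − i − j + 2 = δ), the box (i,j) lies in [λ] iff
#(×'s left of n) − #(∘'s left of n) < T, where n = e_δ(λ)_j. -/
theorem stmt5 (δ m T : ℤ) (hmT : (δ = 2 * m ∧ T = m - 1) ∨ (δ = 2 * m + 1 ∧ T = m))
    (p : Ptn) (i j : ℕ+) (hij : j < i)
    (hd : (p.transpose i : ℤ) + (p.transpose j : ℤ)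
        - ((i : ℕ) : ℤ) - ((j : ℕ) : ℤ) + 2 = δ) :
    ((i : ℕ) ≤ p.transpose j) ↔
      (Set.ncard {n' : ℚ | n' ∈ Lset δ ∧ n' < ed δ p j ∧ IsTimes δ p n'} : ℤ)
        - (Set.ncard {n' : ℚ | n' ∈ Lset δ ∧ n' < ed δ p j ∧ IsCirc δ p n'} : ℤ) < T := by
  have hneg : ed δ p i = - ed δ p j := by
    have : (p.transpose i : ℚ) + (p.transpose j : ℚ)
        - ((i : ℕ) : ℚ) - ((j : ℕ) : ℚ) + 2 = δ := by exact_mod_cast hd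
    unfold ed
    linarith
  have hpos : 0 < ed δ p j := by
    have := aux_anti δ p hij
    linarith
  have hposZ : 0 < 2 * (p.transpose j : ℤ) - δ - 2 * (j : ℕ) + 2 := by
    have : (0 : ℚ) < 2 * (p.transpose j : ℚ) - δ - 2 * (j : ℕ) + 2 := by
      unfold ed at hpos; linarith
    exact_mod_cast this
  rcases hmT with ⟨h1, h2⟩ | ⟨h1, h2⟩
  · obtain ⟨N, hN⟩ := Int.eq_ofNat_of_zero_le
      (show 0 ≤ (p.transpose j : ℤ) - m - (j : ℕ) + 1 by omega)
    have hNq : (p.transpose j : ℚ) - m - (j : ℕ) + 1 = N := by exact_mod_cast hN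
    obtain ⟨W, hc, hW⟩ := aux_W δ (ed δ p j) N 0 m (Or.inl ⟨rfl, h1⟩) (by
      unfold ed; rw [h1]; push_cast; linarith)
    rw [aux_count δ p i j hij hneg W hW, hc]
    omega
  · obtain ⟨N, hN⟩ := Int.eq_ofNat_of_zero_le
      (show 0 ≤ (p.transpose j : ℤ) - m - (j : ℕ) by omega)
    have hNq : (p.transpose j : ℚ) - m - (j : ℕ) = N := by exact_mod_cast hN
    obtain ⟨W, hc, hW⟩ := aux_W δ (ed δ p j) N (1/2) m (Or.inr ⟨rfl, h1⟩) (by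
      unfold ed; rw [h1]; push_cast; linarith)
    rw [aux_count δ p i j hij hneg W hW, hc]
    omega
end

section
/- Let δ ∈ ℤ and let λ be a partition. The map (i,j) ↦ λ_i − i + δ/2 is a well-defined bijection from the set {(i,j) ∈ ℕ² : 1 ≤ i ≤ j, −λ_i − λ_j + i + j = δ} onto the set of vertices of L labelled ∘ in the weight diagram x_λ, i.e. onto {n ∈ L : no entry of e_δ(λ) has absolute value n}. In particular, for every such pair (i,j) one has λ_i − i + δ/2 = −(λ_j − j + δ/2) ≥ 0. -/
open Polynomial

theorem Ptn.le_transpose_iff (p : Ptn) (j k : ℕ+) :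
    (k : ℕ) ≤ p.transpose j ↔ (j : ℕ) ≤ p.toFun k := by
  obtain ⟨N, hN⟩ := p.finite_support'
  have hfin : Set.Finite {k : ℕ+ | (j : ℕ) ≤ p.toFun k} := by
    apply (Set.finite_Iic N).subset
    intro k hk
    by_contra h
    have h2 := hN k (le_of_lt (not_le.mp h))
    have h3 := j.pos
    simp only [Set.mem_setOf_eq] at hk
    omega
  constructor
  · intro h
    by_contra hk
    have hsub : {k : ℕ+ | (j : ℕ) ≤ p.toFun k} ⊆ (↑(Finset.Ico 1 k) : Set ℕ+) := by
      intro l hl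
      simp only [Finset.coe_Ico, Set.mem_Ico, PNat.one_le, true_and]
      by_contra h'
      have := p.antitone' k l (not_lt.mp h')
      simp only [Set.mem_setOf_eq] at hl
      omega
    have := Set.ncard_le_ncard hsub (Finset.finite_toSet _)
    rw [Set.ncard_coe_finset, PNat.card_Ico] at this
    have h3 := k.pos
    unfold Ptn.transpose at h
    simp only [PNat.one_coe] at this
    omega
  · intro h
    have hsub : (↑(Finset.Icc 1 k) : Set ℕ+) ⊆ {k : ℕ+ | (j : ℕ) ≤ p.toFun k} := by
      intro l hl
      simp only [Finset.coe_Icc, Set.mem_Icc, PNat.one_le, true_and] at hl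
      exact h.trans (p.antitone' l k hl)
    have := Set.ncard_le_ncard hsub hfin
    rw [Set.ncard_coe_finset, PNat.card_Icc] at this
    unfold Ptn.transpose
    simp only [PNat.one_coe] at this
    omega

theorem Ptn.disj (p : Ptn) (i j : ℕ+) :
    (p.toFun i : ℤ) - (i : ℕ) ≠ (j : ℕ) - 1 - (p.transpose j : ℤ) := by
  intro h
  have := p.le_transpose_iff j i
  omega

theorem Ptn.cover (p : Ptn) (m : ℤ)
    (hm : ∀ j : ℕ+, m ≠ ((j : ℕ) : ℤ) - 1 - (p.transpose j : ℤ)) :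
    ∃ i : ℕ+, (p.toFun i : ℤ) - ((i : ℕ) : ℤ) = m := by
  classical
  have hex : ∃ i : ℕ, ∃ h : 0 < i, (p.toFun ⟨i, h⟩ : ℤ) - (i : ℤ) ≤ m := by
    obtain ⟨N, hN⟩ := p.finite_support'
    have hpos : 0 < (N : ℕ) + m.natAbs := by have := N.pos; omega
    have h0 : p.toFun ⟨(N : ℕ) + m.natAbs, hpos⟩ = 0 := by
      apply hN
      exact (PNat.coe_le_coe _ _).mp (Nat.le_add_right _ _)
    refine ⟨N + m.natAbs, hpos, ?_⟩
    have hN0 := N.pos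
    omega
  obtain ⟨hi, hle⟩ := Nat.find_spec hex
  have hmin := fun k => Nat.find_min (m := k) hex
  generalize Nat.find hex = i at hi hle hmin
  refine ⟨⟨i, hi⟩, ?_⟩
  by_contra hne
  simp only [PNat.mk_coe] at hne
  have hj : 0 < (m + i).toNat := by omega
  apply hm ⟨(m + i).toNat, hj⟩
  have h1 := p.le_transpose_iff ⟨(m + i).toNat, hj⟩ ⟨i, hi⟩
  simp only [PNat.mk_coe] at h1 ⊢
  by_cases h0 : i = 1
  · omega
  · have hi' : 0 < i - 1 := by omega
    have h2 := p.le_transpose_iff ⟨(m + i).toNat, hj⟩ ⟨i - 1, hi'⟩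
    have h3 := hmin (i - 1) (by omega)
    have h4 : ¬ ((p.toFun ⟨i - 1, hi'⟩ : ℤ) - ((i - 1 : ℕ) : ℤ) ≤ m) := fun h => h3 ⟨hi', h⟩
    simp only [PNat.mk_coe] at h2
    omega

theorem Ptn.lt_of_lt (p : Ptn) {i j : ℕ+} (h : i < j) :
    (p.toFun j : ℤ) - ((j : ℕ) : ℤ) < (p.toFun i : ℤ) - ((i : ℕ) : ℤ) := by
  have := p.antitone' i j h.le
  have h2 : (i : ℕ) < j := h
  omega

theorem Ptn.inj (p : Ptn) {i j : ℕ+}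
    (h : (p.toFun i : ℤ) - ((i : ℕ) : ℤ) = (p.toFun j : ℤ) - ((j : ℕ) : ℤ)) : i = j := by
  rcases lt_trichotomy i j with h' | h' | h'
  · have := p.lt_of_lt h'; omega
  · exact h'
  · have := p.lt_of_lt h'; omega

/-- (i,j) ↦ λ_i − i + δ/2 is a bijection from
{(i,j) : 1 ≤ i ≤ j, −λ_i − λ_j + i + j = δ} onto the ∘'s of x_λ, and for every such
pair λ_i − i + δ/2 = −(λ_j − j + δ/2) ≥ 0. -/
theorem stmt6 (δ : ℤ) (p : Ptn) :
    Set.BijOn (fun q : ℕ+ × ℕ+ => (p.toFun q.1 : ℚ) - ((q.1 : ℕ) : ℚ) + (δ : ℚ) / 2)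
      {q : ℕ+ × ℕ+ | q.1 ≤ q.2 ∧
        -(p.toFun q.1 : ℤ) - (p.toFun q.2 : ℤ) + ((q.1 : ℕ) : ℤ) + ((q.2 : ℕ) : ℤ) = δ}
      {n : ℚ | n ∈ Lset δ ∧ IsCirc δ p n} ∧
    ∀ q : ℕ+ × ℕ+, (q.1 ≤ q.2 ∧
        -(p.toFun q.1 : ℤ) - (p.toFun q.2 : ℤ) + ((q.1 : ℕ) : ℤ) + ((q.2 : ℕ) : ℤ) = δ) →
      ((p.toFun q.1 : ℚ) - ((q.1 : ℕ) : ℚ) + (δ : ℚ) / 2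
          = -((p.toFun q.2 : ℚ) - ((q.2 : ℕ) : ℚ) + (δ : ℚ) / 2) ∧
        0 ≤ (p.toFun q.1 : ℚ) - ((q.1 : ℕ) : ℚ) + (δ : ℚ) / 2) := by
  have key : ∀ q : ℕ+ × ℕ+, (q.1 ≤ q.2 ∧
        -(p.toFun q.1 : ℤ) - (p.toFun q.2 : ℤ) + ((q.1 : ℕ) : ℤ) + ((q.2 : ℕ) : ℤ) = δ) →
      ((p.toFun q.1 : ℚ) - ((q.1 : ℕ) : ℚ) + (δ : ℚ) / 2
          = -((p.toFun q.2 : ℚ) - ((q.2 : ℕ) : ℚ) + (δ : ℚ) / 2) ∧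
        0 ≤ (p.toFun q.1 : ℚ) - ((q.1 : ℕ) : ℚ) + (δ : ℚ) / 2) := by
    rintro ⟨i, j⟩ ⟨hij, h⟩
    simp only at hij h ⊢
    have hq : -(p.toFun i : ℚ) - (p.toFun j : ℚ) + ((i : ℕ) : ℚ) + ((j : ℕ) : ℚ) = δ := by
      exact_mod_cast h
    have h1 : (p.toFun j : ℚ) ≤ p.toFun i := by exact_mod_cast p.antitone' i j hij
    have h2 : ((i : ℕ) : ℚ) ≤ (j : ℕ) := by exact_mod_cast hij
    constructor <;> linarith
  refine ⟨⟨?_, ?_, ?_⟩, key⟩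
  · rintro ⟨i, j⟩ hq
    obtain ⟨k1, k2⟩ := key _ hq
    simp only at k1 k2
    refine ⟨⟨k2, (p.toFun i : ℤ) - ((i : ℕ) : ℤ) + δ, by push_cast; ring⟩, ?_⟩
    intro l hl
    simp only at hl
    rcases (abs_eq k2).mp hl with h | h
    · apply p.disj j l
      unfold ed at h
      rw [k1] at h
      have : (p.toFun j : ℚ) - ((j : ℕ) : ℚ) = ((l : ℕ) : ℚ) - 1 - (p.transpose l : ℚ) := by
        linarith
      exact_mod_cast this
    · apply p.disj i l
      unfold ed at h
      have : (p.toFun i : ℚ) - ((i : ℕ) : ℚ) = ((l : ℕ) : ℚ) - 1 - (p.transpose l : ℚ) := by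
        linarith
      exact_mod_cast this
  · rintro ⟨i, j⟩ ⟨_, h⟩ ⟨i', j'⟩ ⟨_, h'⟩ heq
    simp only at h h' heq
    have e : (p.toFun i : ℤ) - ((i : ℕ) : ℤ) = (p.toFun i' : ℤ) - ((i' : ℕ) : ℤ) := by
      have : (p.toFun i : ℚ) - ((i : ℕ) : ℚ) = (p.toFun i' : ℚ) - ((i' : ℕ) : ℚ) := by linarith
      exact_mod_cast this
    have e1 := p.inj e
    have e2 : j = j' := p.inj (by omega)
    rw [e1, e2]
  · rintro n ⟨⟨hn, k, hk⟩, hc⟩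
    obtain ⟨i, hi⟩ := p.cover (k - δ) (by
      intro l hl
      apply hc l
      rw [abs_eq hn]
      right
      have : (k : ℚ) - δ = ((l : ℕ) : ℚ) - 1 - (p.transpose l : ℚ) := by exact_mod_cast hl
      unfold ed
      linarith)
    obtain ⟨j, hj⟩ := p.cover (-k) (by
      intro l hl
      apply hc l
      rw [abs_eq hn]
      left
      have : -(k : ℚ) = ((l : ℕ) : ℚ) - 1 - (p.transpose l : ℚ) := by exact_mod_cast hl
      unfold ed
      linarith)
    refine ⟨(i, j), ⟨?_, ?_⟩, ?_⟩
    · by_contra hlt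
      have h1 := p.lt_of_lt (not_le.mp hlt)
      rw [hi, hj] at h1
      have h2 : (k : ℚ) - δ < -k := by exact_mod_cast h1
      linarith
    · simp only
      omega
    · simp only
      have : (p.toFun i : ℚ) - ((i : ℕ) : ℚ) = k - δ := by exact_mod_cast hi
      linarith
end

section
/- Let δ ∈ ℤ and let λ be a partition. Then #{(i,j) ∈ [λ] : d(i,j) = 1 − δ} = deg_δ(λ) − deg_δ(∅). (The left-hand side is the multiplicity of u = δ as a root of the King polynomial P_λ(u).) -/
open Polynomial

/-- Finite initial segments of `ℕ+`. -/
lemma aux_initial (S : Set ℕ+) (hf : S.Finite) (hd : ∀ i j : ℕ+, i ≤ j → j ∈ S → i ∈ S)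
    (k : ℕ+) : k ∈ S ↔ (k : ℕ) ≤ S.ncard := by
  have hc : ∀ k : ℕ+, (Set.Iic k).ncard = (k : ℕ) := by
    intro k
    have h1 : (Set.Iic k) = ((Finset.Icc 1 k : Finset ℕ+) : Set ℕ+) := by
      ext a; simp
    rw [h1, Set.ncard_coe_finset, PNat.card_Icc]
    simp
  constructor
  · intro hk
    rw [← hc k]
    exact Set.ncard_le_ncard (fun a ha => hd a k ha hk) hf
  · intro hk
    by_contra hn
    have hsub : S ⊆ Set.Iio k := by
      intro a ha
      by_contra hlt
      exact hn (hd k a (not_lt.mp hlt) ha)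
    have hss : S ⊂ Set.Iic k := by
      refine ⟨fun a ha => Set.mem_Iic.mpr (le_of_lt (Set.mem_Iio.mp (hsub ha))), fun h => hn (h (Set.mem_Iic.mpr le_rfl))⟩
    have hfin : (Set.Iic k).Finite := Set.finite_Iic k
    have := Set.ncard_lt_ncard hss hfin
    rw [hc k] at this
    omega

lemma aux_transpose (p : Ptn) (i k : ℕ+) :
    (i : ℕ) ≤ p.toFun k ↔ (k : ℕ) ≤ p.transpose i := by
  have := aux_initial {k : ℕ+ | (i : ℕ) ≤ p.toFun k} ?_ ?_ k
  · simpa [Ptn.transpose] using this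
  · obtain ⟨N, hN⟩ := p.finite_support'
    refine (Set.finite_Iic N).subset ?_
    intro a ha
    by_contra h
    have h0 := hN a (le_of_lt (not_le.mp h))
    have := i.pos
    simp only [Set.mem_ofPred_eq] at ha
    omega
  · intro a b hab hb
    exact le_trans hb (p.antitone' a b hab)

lemma aux_transpose_anti (p : Ptn) (i j : ℕ+) (h : i ≤ j) : p.transpose j ≤ p.transpose i := by
  by_contra hlt
  push Not at hlt
  have hpos : 0 < p.transpose j := by omega
  have h1 := (aux_transpose p j ⟨_, hpos⟩).2 le_rfl
  have h2 := (aux_transpose p i ⟨_, hpos⟩).1 (le_trans (by exact_mod_cast h) h1)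
  simp only [PNat.mk_coe] at h2
  omega

/-- The shifted sequence attached to the transpose. -/
noncomputable def cS (p : Ptn) (j : ℕ+) : ℤ := (p.transpose j : ℤ) - ((j : ℕ) : ℤ) + 1

/-- The complementary sequence. -/
def bS (p : Ptn) (i : ℕ+) : ℤ := ((i : ℕ) : ℤ) - (p.toFun i : ℤ)

lemma aux_P (p : Ptn) : ∃ P : ℤ → ℤ, (∀ x, 0 ≤ P x) ∧ (∀ x, 0 ≤ P x + x) ∧
    (∀ x (j : ℕ+), ((j : ℕ) : ℤ) ≤ P x ↔ x < cS p j) ∧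
    (∀ x (i : ℕ+), ((i : ℕ) : ℤ) ≤ P x + x ↔ bS p i ≤ x) := by
  have hA : ∀ x (j : ℕ+), ((j : ℕ) : ℤ) ≤ ((Set.ncard {j : ℕ+ | x < cS p j} : ℕ) : ℤ)
      ↔ x < cS p j := by
    intro x j
    have := aux_initial {j : ℕ+ | x < cS p j} ?_ ?_ j
    · rw [Nat.cast_le, ← this]; rfl
    · have hpos : 0 < (p.transpose 1 + x.natAbs + 1) := by omega
      refine (Set.finite_Iic (α := ℕ+) ⟨_, hpos⟩).subset ?_
      intro a ha
      have h1 := aux_transpose_anti p 1 a (one_le (a := a))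
      have ha' : x < cS p a := ha
      simp only [cS] at ha'
      refine Set.mem_Iic.2 (?_ : (a : ℕ) ≤ p.transpose 1 + x.natAbs + 1)
      omega
    · intro a b hab hb
      have h1 := aux_transpose_anti p a b hab
      have h2 : (a : ℕ) ≤ b := hab
      simp only [Set.mem_ofPred_eq, cS] at hb ⊢
      omega
  refine ⟨fun x => ((Set.ncard {j : ℕ+ | x < cS p j} : ℕ) : ℤ), fun x => by positivity, ?_, hA, ?_⟩
  · intro x
    by_contra hlt
    beta_reduce at hlt
    have hpos : 0 < (-x).toNat := by omega
    have := hA x ⟨_, hpos⟩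
    simp only [cS, PNat.mk_coe] at this
    simp only [cS] at hlt
    omega
  · intro x i
    have hi := i.pos
    by_cases h : 1 ≤ ((i : ℕ) : ℤ) - x
    · have hpos : 0 < (((i : ℕ) : ℤ) - x).toNat := by omega
      have h1 := hA x ⟨_, hpos⟩
      have h2 := aux_transpose p ⟨_, hpos⟩ i
      simp only [cS, PNat.mk_coe] at h1 h2 ⊢
      simp only [bS]
      omega
    · simp only [bS]
      omega

lemma aux_main (δ : ℤ) : ∃ K : ℤ, ∀ p : Ptn,
    (Set.ncard {q : ℕ+ × ℕ+ | (q.2 : ℕ) ≤ p.toFun q.1 ∧ dbox p q.1 q.2 = 1 - δ} : ℤ)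
      = (degd δ p : ℤ) - K := by
  refine ⟨max (1 - δ) 0 - max (1 - (δ - δ / 2)) 0, fun p => ?_⟩
  obtain ⟨P, hP0, hP1, hA, hB⟩ := aux_P p
  set h := δ / 2 with hh
  -- basic facts
  have hmono : ∀ x, P x ≤ P (x - 1) := by
    intro x
    by_contra hlt
    have hpos : 0 < (P x).toNat := by have := hP0 (x-1); omega
    have h1 := hA x ⟨_, hpos⟩
    have h2 := hA (x-1) ⟨_, hpos⟩
    simp only [PNat.mk_coe] at h1 h2
    omega
  have hmono' : ∀ x, P (x - 1) ≤ P x + 1 := by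
    intro x
    by_contra hlt
    have hpos : 0 < (P (x-1) + (x-1)).toNat := by have := hP1 x; omega
    have h1 := hB x ⟨_, hpos⟩
    have h2 := hB (x-1) ⟨_, hpos⟩
    simp only [PNat.mk_coe] at h1 h2
    omega
  have hc : ∀ x (j : ℕ+), cS p j = x ↔ P (x - 1) = P x + 1 ∧ ((j : ℕ) : ℤ) = P x + 1 := by
    intro x j
    have := hA x j
    have := hA (x-1) j
    have := hmono x
    have := hmono' x
    omega
  have hb : ∀ x (i : ℕ+), bS p i = x ↔ P (x - 1) = P x ∧ ((i : ℕ) : ℤ) = P x + x := by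
    intro x j
    have := hB x j
    have := hB (x-1) j
    have := hmono x
    have := hmono' x
    omega
  obtain ⟨N, hN0, hN1, hN2⟩ : ∃ N : ℤ, 0 ≤ N ∧ (∀ x, N ≤ x → P x = 0) ∧
      (∀ x, x ≤ -N → P x = -x) := by
    refine ⟨p.transpose 1 + p.toFun 1 + 1, by positivity, ?_, ?_⟩
    · intro x hx
      have h1 := hA x 1
      have h2 := hP0 x
      simp only [cS, PNat.one_coe] at h1
      omega
    · intro x hx
      have h1 := hB x 1
      have h2 := hP1 x
      simp only [bS, PNat.one_coe] at h1
      omega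
  -- the two reduced sets
  set F : Set (ℕ+ × ℕ+) := {q | (q.2 : ℕ) ≤ p.toFun q.1 ∧ (q.1 : ℕ) ≤ q.2 ∧
    bS p q.1 + bS p q.2 = δ} with hF
  set G : Set (ℕ+ × ℕ+) := {q | (q.1 : ℕ) < q.2 ∧ ¬ ((q.1 : ℕ) ≤ p.toFun q.2) ∧
    cS p q.1 + cS p q.2 = δ} with hG
  set H : Set (ℕ+ × ℕ+) := {q | (q.1 : ℕ) < q.2 ∧ ((q.1 : ℕ) ≤ p.toFun q.2) ∧
    cS p q.1 + cS p q.2 = δ} with hH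
  set n : ℕ := (N + 2 * |δ| + 2).toNat with hn
  have hnN : (n : ℤ) = N + 2 * |δ| + 2 := by
    rw [hn, Int.toNat_of_nonneg]; positivity
  have habs1 := le_abs_self δ
  have habs2 := neg_abs_le δ
  set T : ℤ → ℤ := fun x => P x - P (δ - x - 1) - (δ - x - 1) with hT
  have hFc : F.ncard = ((Finset.range n).filter (fun k : ℕ => P (h - k - 1) = P (h - k) ∧
      P (δ - (h - k) - 1) = P (δ - (h - k)) ∧ 1 ≤ T (h - k))).card := by
    rw [← Set.ncard_coe_finset]
    refine Set.ncard_congr (fun q _ => (h - bS p q.1).toNat) ?_ ?_ ?_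
    · rintro ⟨i, j⟩ ⟨h1, h2, h3⟩
      simp only at h1 h2 h3 ⊢
      have e1 := (hb _ i).1 rfl
      have e2 := (hb (δ - bS p i) j).1 (by omega)
      have hij : bS p i ≤ bS p j := by
        have := p.antitone' i j h2
        simp only [bS]; omega
      have hle : bS p i ≤ h := by omega
      have hk : (((h - bS p i).toNat : ℕ) : ℤ) = h - bS p i := by omega
      have hx : h - (h - bS p i) = bS p i := by ring
      have hlt : -N < bS p i := by
        by_contra hcon
        have := hN2 (bS p i) (by omega)
        have := hN2 (bS p i - 1) (by omega)
        omega
      simp only [Finset.coe_filter, Set.mem_ofPred_eq, Finset.mem_range, hk, hx, hT]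
      have hbi : bS p i = (i : ℕ) - (p.toFun i : ℤ) := rfl
      refine ⟨by omega, e1.1, e2.1, by omega⟩
    · rintro ⟨i, j⟩ ⟨i', j'⟩ ⟨h1, h2, h3⟩ ⟨h1', h2', h3'⟩ heq
      simp only at h1 h2 h3 h1' h2' h3' heq
      have hij : bS p i ≤ bS p j := by
        have := p.antitone' i j h2
        simp only [bS]; omega
      have hij' : bS p i' ≤ bS p j' := by
        have := p.antitone' i' j' h2'
        simp only [bS]; omega
      have hbb : bS p i = bS p i' := by omega
      have e1 := (hb _ i).1 rfl
      have e2 := (hb _ j).1 rfl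
      have e1' := (hb _ i').1 hbb.symm
      have e2' := (hb (bS p j) j').1 (by omega)
      have a1 : i = i' := PNat.eq (by omega)
      have a2 : j = j' := PNat.eq (by omega)
      rw [a1, a2]
    · intro k hk
      simp only [Finset.coe_filter, Set.mem_ofPred_eq, Finset.mem_range, hT] at hk
      obtain ⟨k1, k2, k3, k4⟩ := hk
      generalize hx : h - (k : ℤ) = x at *
      have p1 : 0 < (P x + x).toNat := by
        have := hP0 (δ - x)
        have := hP1 (x-1)
        omega
      have p2 : 0 < (P (δ - x) + (δ - x)).toNat := by
        have := hP1 (δ - x - 1)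
        omega
      have e1 := (hb x ⟨_, p1⟩).2 ⟨k2, by simp only [PNat.mk_coe]; omega⟩
      have e2 := (hb (δ - x) ⟨_, p2⟩).2 ⟨k3, by simp only [PNat.mk_coe]; omega⟩
      have hanti : ∀ m : ℕ, P (x + m) + (x + m) ≥ P x + x := by
        intro m
        induction m with
        | zero => simp
        | succ m ih =>
          have := hmono' (x + (m + 1 : ℕ))
          have e : x + ((m + 1 : ℕ) : ℤ) - 1 = x + m := by push_cast; ring
          rw [e] at this
          push_cast at *
          omega
      have hm := hanti (δ - x - x).toNat
      have hme : x + ((δ - x - x).toNat : ℤ) = δ - x := by omega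
      rw [hme] at hm
      refine ⟨(⟨_, p1⟩, ⟨_, p2⟩), ⟨?_, ?_, ?_⟩, ?_⟩
      · simp only [bS, PNat.mk_coe] at e1 e2 ⊢
        omega
      · simp only [PNat.mk_coe]
        omega
      · simp only [e1, e2]; ring
      · simp only [e1]; omega
  have hGc : G.ncard = ((Finset.range n).filter (fun k : ℕ => 2 * (h - k) < δ ∧
      P (h - k - 1) = P (h - k) + 1 ∧
      P (δ - (h - k) - 1) = P (δ - (h - k)) + 1 ∧ 0 ≤ T (h - k))).card := by
    rw [← Set.ncard_coe_finset]
    refine Set.ncard_congr (fun q _ => (h - cS p q.2).toNat) ?_ ?_ ?_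
    · rintro ⟨i, j⟩ ⟨h1, h2, h3⟩
      simp only at h1 h2 h3 ⊢
      have e1 := (hc _ j).1 rfl
      have e2 := (hc (δ - cS p j) i).1 (by omega)
      have hij : cS p j < cS p i := by
        have := aux_transpose_anti p i j (le_of_lt h1)
        simp only [cS]; omega
      have hle : cS p j ≤ h := by omega
      have hk : (((h - cS p j).toNat : ℕ) : ℤ) = h - cS p j := by omega
      have hx : h - (h - cS p j) = cS p j := by ring
      have hlt : δ - cS p j ≤ N := by
        by_contra hcon
        have := hN1 (δ - cS p j) (by omega)
        have := hN1 (δ - cS p j - 1) (by omega)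
        omega
      simp only [Finset.coe_filter, Set.mem_ofPred_eq, Finset.mem_range, hk, hx, hT]
      have hci : cS p i = (p.transpose i : ℤ) - (i : ℕ) + 1 := rfl
      rw [aux_transpose] at h2
      refine ⟨by omega, by omega, e1.1, e2.1, by omega⟩
    · rintro ⟨i, j⟩ ⟨i', j'⟩ ⟨h1, h2, h3⟩ ⟨h1', h2', h3'⟩ heq
      simp only at h1 h2 h3 h1' h2' h3' heq
      have hij : cS p j < cS p i := by
        have := aux_transpose_anti p i j (le_of_lt h1)
        simp only [cS]; omega
      have hij' : cS p j' < cS p i' := by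
        have := aux_transpose_anti p i' j' (le_of_lt h1')
        simp only [cS]; omega
      have hbb : cS p j = cS p j' := by omega
      have e1 := (hc _ i).1 rfl
      have e2 := (hc _ j).1 rfl
      have e1' := (hc (cS p i) i').1 (by omega)
      have e2' := (hc _ j').1 hbb.symm
      have a1 : i = i' := PNat.eq (by omega)
      have a2 : j = j' := PNat.eq (by omega)
      rw [a1, a2]
    · intro k hk
      simp only [Finset.coe_filter, Set.mem_ofPred_eq, Finset.mem_range, hT] at hk
      obtain ⟨k1, k0, k2, k3, k4⟩ := hk
      generalize hx : h - (k : ℤ) = x at *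
      have p1 : 0 < (P x + 1).toNat := by
        have := hP0 x
        omega
      have p2 : 0 < (P (δ - x) + 1).toNat := by
        have := hP0 (δ - x)
        omega
      have e1 := (hc x ⟨_, p1⟩).2 ⟨k2, by simp only [PNat.mk_coe]; omega⟩
      have e2 := (hc (δ - x) ⟨_, p2⟩).2 ⟨k3, by simp only [PNat.mk_coe]; omega⟩
      have hanti : ∀ m : ℕ, P (x + m) ≤ P x := by
        intro m
        induction m with
        | zero => simp
        | succ m ih =>
          have := hmono (x + (m + 1 : ℕ))
          have e : x + ((m + 1 : ℕ) : ℤ) - 1 = x + m := by push_cast; ring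
          rw [e] at this
          omega
      have hm := hanti (δ - x - x - 1).toNat
      have hme : x + ((δ - x - x - 1).toNat : ℤ) = δ - x - 1 := by omega
      rw [hme] at hm
      refine ⟨(⟨_, p2⟩, ⟨_, p1⟩), ⟨?_, ?_, ?_⟩, ?_⟩
      · simp only [PNat.mk_coe]
        omega
      · rw [aux_transpose]
        simp only [cS, PNat.mk_coe] at e1 e2 ⊢
        omega
      · simp only [e1, e2]; ring
      · simp only [e1]; omega
  -- telescoping
  have hGF : (G.ncard : ℤ) - F.ncard = max (1 - δ) 0 - max (1 - (δ - h)) 0 := by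
    rw [hFc, hGc, Finset.card_filter, Finset.card_filter]
    push_cast
    rw [← Finset.sum_sub_distrib]
    set V : ℕ → ℤ := fun k => if k = 0 then max (1 - (δ - h)) 0 else max (T (h - k)) 0 with hV
    have hVn : V n = max (1 - δ) 0 := by
      have hn0 : n ≠ 0 := by omega
      simp only [hV, hn0, if_false, hT]
      rw [hN1 (δ - (h - n) - 1) (by omega), hN2 (h - n) (by omega)]
      congr 1
      ring
    have hV0 : V 0 = max (1 - (δ - h)) 0 := by simp [hV]
    rw [← hVn, ← hV0, ← Finset.sum_range_sub]
    refine Finset.sum_congr rfl fun k _ => ?_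
    have hVs : V (k + 1) = max (P (h - k - 1) - P (δ - (h - k)) - (δ - (h - k))) 0 := by
      simp only [hV, hT, Nat.succ_ne_zero, if_false]
      push_cast
      congr 1
      have e1 : h - ((k : ℤ) + 1) = h - k - 1 := by ring
      have e2 : δ - (h - k - 1) - 1 = δ - (h - k) := by ring
      rw [e1, e2]
    have m1 := hmono (h - k)
    have m2 := hmono' (h - k)
    have m3 := hmono (δ - (h - k))
    have m4 := hmono' (δ - (h - k))
    rw [hVs]
    simp only [hT]
    by_cases hcase : 2 * (h - (k : ℤ)) < δ
    · have hVk : V k = max (P (h - k) - P (δ - (h - k) - 1) - (δ - (h - k) - 1)) 0 := by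
        by_cases hk : k = 0
        · subst hk
          have e : δ - (h - ((0 : ℕ) : ℤ)) - 1 = h - ((0 : ℕ) : ℤ) := by push_cast; omega
          simp only [hV, if_true]
          rw [e]
          push_cast
          congr 1
          omega
        · simp only [hV, hk, if_false, hT]
      rw [hVk]
      split_ifs <;> omega
    · have hk : k = 0 := by omega
      subst hk
      have e : δ - (h - ((0 : ℕ) : ℤ)) = h - ((0 : ℕ) : ℤ) := by push_cast; omega
      rw [hV0]
      rw [e] at m3 m4 ⊢
      split_ifs <;> omega
  -- finiteness
  have hfinb : {q : ℕ+ × ℕ+ | (q.2 : ℕ) ≤ p.toFun q.1}.Finite := by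
    have q1 : 0 < p.transpose 1 + 1 := by omega
    have q2 : 0 < p.toFun 1 + 1 := by omega
    refine ((Set.finite_Iic (α := ℕ+) ⟨_, q1⟩).prod (Set.finite_Iic (α := ℕ+) ⟨_, q2⟩)).subset ?_
    rintro ⟨i, j⟩ hq
    replace hq : (j : ℕ) ≤ p.toFun i := hq
    have h1 := p.antitone' 1 i (one_le (a := i))
    have h2 := (aux_transpose p j i).1 hq
    have h3 := aux_transpose_anti p 1 j (one_le (a := j))
    refine ⟨(?_ : (i : ℕ) ≤ p.transpose 1 + 1), (?_ : (j : ℕ) ≤ p.toFun 1 + 1)⟩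
    · omega
    · omega
  have hHfin : H.Finite := by
    refine (hfinb.image Prod.swap).subset ?_
    rintro ⟨i, j⟩ ⟨_, h2, _⟩
    exact ⟨(j, i), h2, rfl⟩
  have hGfin : G.Finite := by
    have q1 : 0 < (2 * p.transpose 1 + δ.natAbs + 2) := by omega
    refine ((Set.finite_Iic (α := ℕ+) ⟨_, q1⟩).prod (Set.finite_Iic (α := ℕ+) ⟨_, q1⟩)).subset ?_
    rintro ⟨i, j⟩ ⟨h1, h2, h3⟩
    simp only [cS] at h1 h3
    have h4 := aux_transpose_anti p 1 j (one_le (a := j))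
    have h5 := aux_transpose_anti p 1 i (one_le (a := i))
    refine ⟨(?_ : (i : ℕ) ≤ 2 * p.transpose 1 + δ.natAbs + 2),
      (?_ : (j : ℕ) ≤ 2 * p.transpose 1 + δ.natAbs + 2)⟩
    · omega
    · omega
  have hdeg : degd δ p = H.ncard + G.ncard := by
    rw [← Set.ncard_union_eq _ hHfin hGfin]
    · unfold degd
      congr 1
      ext ⟨i, j⟩
      have hlt : i < j ↔ (i : ℕ) < j := Iff.rfl
      have he : ed δ p i + ed δ p j = 0 ↔ cS p i + cS p j = δ := by
        rw [← Int.cast_inj (α := ℚ)]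
        simp only [ed, cS]
        push_cast
        constructor <;> intro h <;> linarith
      simp only [hH, hG, Set.mem_union, Set.mem_ofPred_eq, hlt, he]
      tauto
    · rw [Set.disjoint_left]
      rintro q ⟨_, h2, _⟩ ⟨_, h2', _⟩
      exact h2' h2
  have hL : Set.ncard {q : ℕ+ × ℕ+ | (q.2 : ℕ) ≤ p.toFun q.1 ∧ dbox p q.1 q.2 = 1 - δ}
      = F.ncard + H.ncard := by
    have hsw : H.ncard = (Set.image Prod.swap H).ncard :=
      (Set.ncard_image_of_injective H Prod.swap_injective).symm
    have hms : ∀ i j : ℕ+, (i, j) ∈ Set.image Prod.swap H ↔ ((j : ℕ) < i ∧ (j : ℕ) ≤ p.toFun i ∧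
        cS p j + cS p i = δ) := by
      intro i j
      constructor
      · rintro ⟨⟨a, b⟩, hab, e⟩
        cases e
        exact hab
      · intro hab
        exact ⟨(j, i), hab, rfl⟩
    rw [hsw, ← Set.ncard_union_eq _ (hfinb.subset fun q hq => hq.1) (hHfin.image _)]
    · congr 1
      ext ⟨i, j⟩
      rw [Set.mem_union, hms]
      simp only [hF, Set.mem_ofPred_eq, dbox, bS, cS]
      split_ifs with hij
      · omega
      · omega
    · rw [Set.disjoint_left]
      rintro ⟨i, j⟩ ⟨_, h2, _⟩ h'
      rw [hms] at h'
      simp only at h2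
      omega
  rw [hL, hdeg]
  push_cast
  linarith

/-- #{(i,j) ∈ [λ] : d(i,j) = 1 − δ} = deg_δ(λ) − deg_δ(∅). -/
theorem stmt9 (δ : ℤ) (p : Ptn) :
    (Set.ncard {q : ℕ+ × ℕ+ | (q.2 : ℕ) ≤ p.toFun q.1 ∧ dbox p q.1 q.2 = 1 - δ} : ℤ)
      = (degd δ p : ℤ) - (degd δ Ptn.empty : ℤ) := by
  obtain ⟨K, hK⟩ := aux_main δ
  have h0 := hK Ptn.empty
  have he : {q : ℕ+ × ℕ+ | (q.2 : ℕ) ≤ Ptn.empty.toFun q.1 ∧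
      dbox Ptn.empty q.1 q.2 = 1 - δ} = ∅ := by
    ext ⟨i, j⟩
    have := j.pos
    simp [Ptn.empty]
  rw [he, Set.ncard_empty] at h0
  rw [hK p]
  push_cast at h0
  linarith
end
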